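/- There exists C > 0 such that for each sign σ ∈ {+1,−1} and all nonnegative square-summable sequences f, g, h : ℤ → [0,∞): Σ_{n₁, n₂ ∈ ℤ} ( ⟨n₁−n₂⟩^{−1} |n₁−n₂| ( ⟨n₁⟩ + ⟨n₂⟩ ) / ( ⟨Φ_σ⟩^{1/2} ⟨n₁⟩^{1/2} ⟨n₂⟩^{1/2} ) ) f_{n₁−n₂} g_{n₁} h_{n₂} ≤ C ‖f‖_{ℓ²} ‖g‖_{ℓ²} ‖h‖_{ℓ²}. -/

import Mathlib

open scoped ENNReal NNReal

/-- `⟨x⟩ = (1+x²)^{1/2}`. -/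
noncomputable def jbR (x : ℝ) : ℝ := Real.sqrt (1 + x ^ 2)

/-- The Zakharov phase `Φ_σ = n₁² - n₂² + σ⟨n₀⟩` with `n₀ = n₁ - n₂`. -/
noncomputable def PhiZak (σ : ℝ) (n₁ n₂ : ℤ) : ℝ :=
  ((n₁ ^ 2 - n₂ ^ 2 : ℤ) : ℝ) + σ * jbR ((n₁ - n₂ : ℤ) : ℝ)

/-- The `ℓ²(ℤ)` norm (valued in `[0,∞]`). -/
noncomputable def l2Z (ω : ℤ → ℝ≥0) : ℝ≥0∞ :=
  (∑' n : ℤ, ((ω n : ℝ≥0∞)) ^ 2) ^ (1/2 : ℝ)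


lemma zk_jb_pos (x : ℝ) : 0 < jbR x := by unfold jbR; positivity
lemma zk_jb_sq (x : ℝ) : jbR x ^ 2 = 1 + x ^ 2 := by
  unfold jbR; exact Real.sq_sqrt (by positivity)
lemma zk_jb_one (x : ℝ) : 1 ≤ jbR x := by
  have := zk_jb_sq x; have := zk_jb_pos x; nlinarith [sq_nonneg x]
lemma zk_jb_abs (x : ℝ) : |x| ≤ jbR x := by
  apply abs_le_of_sq_le_sq _ (zk_jb_pos x).le
  rw [zk_jb_sq]; linarith
lemma zk_jb_le (x y : ℝ) (hy : 0 ≤ y) (h : 1 + x ^ 2 ≤ y ^ 2) : jbR x ≤ y := by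
  unfold jbR; exact Real.sqrt_le_iff.2 ⟨hy, h⟩

/-- The reciprocal weight. -/
noncomputable def zkA (n : ℤ) : ℝ≥0 := Real.toNNReal (1 / jbR (n : ℝ))

lemma zk_phi (σ : ℝ) (hσ : σ = 1 ∨ σ = -1) (a b : ℤ) (h0 : a - b ≠ 0)
    (h1 : |a + b| ≠ 1) :
    jbR ((a - b : ℤ) : ℝ) * jbR ((a + b : ℤ) : ℝ) ≤ 8 * jbR (PhiZak σ a b) := by
  set n : ℝ := ((a - b : ℤ) : ℝ) with hn
  set s : ℝ := ((a + b : ℤ) : ℝ) with hs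
  have hΦ : PhiZak σ a b = n * s + σ * jbR n := by
    unfold PhiZak; rw [hn, hs]; push_cast; ring
  have hn1 : 1 ≤ |n| := by
    rw [hn, ← Int.cast_abs]; exact_mod_cast Int.one_le_abs h0
  have habsσ : |σ| = 1 := by rcases hσ with rfl | rfl <;> simp
  have hN := zk_jb_pos n
  by_cases hs0 : a + b = 0
  · have : s = 0 := by rw [hs, hs0]; simp
    have h2 : |PhiZak σ a b| = jbR n := by
      rw [hΦ, this, mul_zero, zero_add, abs_mul, habsσ, one_mul, abs_of_pos hN]
    have h3 := zk_jb_abs (PhiZak σ a b)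
    have h4 : jbR s ≤ 1 := zk_jb_le _ _ (by norm_num) (by rw [this]; norm_num)
    nlinarith
  · have hs2 : 2 ≤ |s| := by
      rw [hs, ← Int.cast_abs]
      have := Int.one_le_abs hs0
      have : 2 ≤ |a + b| := by omega
      exact_mod_cast this
    have h3 := zk_jb_abs (PhiZak σ a b)
    have h4 : |n| * |s| - jbR n ≤ |PhiZak σ a b| := by
      have := abs_sub_abs_le_abs_sub (n * s) (-(σ * jbR n))
      rw [abs_neg, abs_mul, abs_mul, habsσ, one_mul, abs_of_pos hN, sub_neg_eq_add] at this
      rw [hΦ]; exact this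
    have h5 : jbR n ≤ 1.42 * |n| := zk_jb_le _ _ (by positivity) (by
      rw [← sq_abs n]; nlinarith)
    have h6 : jbR s ≤ 1.12 * |s| := zk_jb_le _ _ (by positivity) (by
      rw [← sq_abs s]; nlinarith)
    have h7 : jbR n * jbR s ≤ (1.42 * |n|) * (1.12 * |s|) :=
      mul_le_mul h5 h6 (zk_jb_pos s).le (by positivity)
    nlinarith

lemma zk_T (σ : ℝ) (hσ : σ = 1 ∨ σ = -1) (a b : ℤ) (h0 : a - b ≠ 0) :
    (jbR a + jbR b) ^ 2 ≤ 16 * (1 / jbR a + 1 / jbR b + 1 / jbR ((a - b : ℤ) : ℝ)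
      + 1 / jbR ((a + b : ℤ) : ℝ)) ^ 2 * (jbR (PhiZak σ a b) * jbR a * jbR b) := by
  have hA := zk_jb_pos a
  have hB := zk_jb_pos b
  have hN := zk_jb_pos ((a - b : ℤ) : ℝ)
  have hS := zk_jb_pos ((a + b : ℤ) : ℝ)
  by_cases h1 : |a + b| = 1
  · have hP := zk_jb_one (PhiZak σ a b)
    have hS2 : jbR ((a + b : ℤ) : ℝ) ^ 2 = 2 := by
      rw [zk_jb_sq, ← sq_abs, ← Int.cast_abs, h1]; norm_num
    have hab : (a + b : ℝ) ^ 2 = 1 := by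
      have : (a + b) ^ 2 = 1 := by rw [← sq_abs, h1]; norm_num
      exact_mod_cast this
    have hT : 1 / 2 ≤ (1 / jbR a + 1 / jbR b + 1 / jbR ((a - b : ℤ) : ℝ)
      + 1 / jbR ((a + b : ℤ) : ℝ)) ^ 2 := by
      have e : (1 / jbR ((a + b : ℤ) : ℝ)) ^ 2 = 1 / 2 := by rw [div_pow, hS2]; norm_num
      rw [← e]
      apply pow_le_pow_left₀ (by positivity)
      have : 0 < 1 / jbR a + 1 / jbR b + 1 / jbR ((a - b : ℤ) : ℝ) := by positivity
      linarith
    have hab1 : jbR a ≤ 2 * jbR b := by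
      apply zk_jb_le _ _ (by positivity)
      rw [mul_pow, zk_jb_sq]
      nlinarith [sq_nonneg ((a:ℝ) + 2 * b)]
    have hab2 : jbR b ≤ 2 * jbR a := by
      apply zk_jb_le _ _ (by positivity)
      rw [mul_pow, zk_jb_sq]
      nlinarith [sq_nonneg ((b:ℝ) + 2 * a)]
    have h3 : (jbR a + jbR b) ^ 2 ≤ 8 * (jbR a * jbR b) := by
      nlinarith [mul_nonneg (sub_nonneg.2 hab1) (sub_nonneg.2 hab2), mul_pos hA hB]
    calc (jbR a + jbR b) ^ 2 ≤ 8 * (jbR a * jbR b) := h3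
      _ = 16 * (1 / 2) * (1 * jbR a * jbR b) := by ring
      _ ≤ _ := by gcongr
  · have hP := zk_phi σ hσ a b h0 h1
    set N := jbR ((a - b : ℤ) : ℝ) with hNd
    set S := jbR ((a + b : ℤ) : ℝ) with hSd
    set P := jbR (PhiZak σ a b)
    set A := jbR (a : ℝ) with hAd
    set B := jbR (b : ℝ) with hBd
    have hmax : A + B ≤ N + S + (N + S) := by
      have e1 : |((a - b : ℤ) : ℝ)| ≤ N := zk_jb_abs _
      have e2 : |((a + b : ℤ) : ℝ)| ≤ S := zk_jb_abs _
      have e3 : 1 ≤ N := zk_jb_one _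
      have e4 : 1 ≤ S := zk_jb_one _
      push_cast at e1 e2
      rw [abs_le] at e1 e2
      have hA' : A ≤ N + S := by
        apply zk_jb_le _ _ (by positivity)
        nlinarith
      have hB' : B ≤ N + S := by
        apply zk_jb_le _ _ (by positivity)
        nlinarith
      linarith
    have key : (A + B) ^ 2 ≤ 2 * ((1 / A + 1 / B) * (1 / N + 1 / S)) * (N * S * A * B) := by
      have : 2 * ((1 / A + 1 / B) * (1 / N + 1 / S)) * (N * S * A * B)
        = 2 * ((A + B) * (N + S)) := by field_simp; ring
      rw [this]; nlinarith
    have hT : (1 / A + 1 / B) * (1 / N + 1 / S) * 4 ≤ (1 / A + 1 / B + 1 / N + 1 / S) ^ 2 := by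
      nlinarith [sq_nonneg (1 / A + 1 / B - (1 / N + 1 / S))]
    calc (A + B) ^ 2 ≤ 2 * ((1 / A + 1 / B) * (1 / N + 1 / S)) * (N * S * A * B) := key
      _ ≤ 2 * ((1 / A + 1 / B) * (1 / N + 1 / S)) * (8 * P * A * B) := by gcongr
      _ = 4 * ((1 / A + 1 / B) * (1 / N + 1 / S) * 4) * (P * A * B) := by ring
      _ ≤ 4 * ((1 / A + 1 / B + 1 / N + 1 / S) ^ 2) * (P * A * B) := by
          have := zk_jb_pos (PhiZak σ a b)
          gcongr
      _ ≤ _ := by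
          have := zk_jb_pos (PhiZak σ a b)
          gcongr; norm_num

lemma zk_W (σ : ℝ) (hσ : σ = 1 ∨ σ = -1) (a b : ℤ) :
    jbR ((a - b : ℤ) : ℝ) ^ (-(1 : ℝ)) * (|a - b| : ℝ) * (jbR (a : ℝ) + jbR (b : ℝ)) /
                  (jbR (PhiZak σ a b) ^ (1/2 : ℝ) * jbR (a : ℝ) ^ (1/2 : ℝ) *
                    jbR (b : ℝ) ^ (1/2 : ℝ)) ≤
    4 * (1 / jbR a + 1 / jbR b + 1 / jbR ((a - b : ℤ) : ℝ) + 1 / jbR ((a + b : ℤ) : ℝ)) := by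
  have hA := zk_jb_pos a
  have hB := zk_jb_pos b
  have hN := zk_jb_pos ((a - b : ℤ) : ℝ)
  have hS := zk_jb_pos ((a + b : ℤ) : ℝ)
  have hP := zk_jb_pos (PhiZak σ a b)
  by_cases h0 : a - b = 0
  · have : (a : ℝ) - b = 0 := by exact_mod_cast h0
    rw [this, abs_zero, mul_zero, zero_mul, zero_div]; positivity
  have hT := zk_T σ hσ a b h0
  rw [← Real.mul_rpow hP.le hA.le, ← Real.mul_rpow (by positivity) hB.le, ← Real.sqrt_eq_rpow,
    div_le_iff₀ (by positivity)]
  have h1 : jbR ((a - b : ℤ) : ℝ) ^ (-(1 : ℝ)) * (|a - b| : ℝ) ≤ 1 := by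
    rw [Real.rpow_neg_one, inv_mul_le_iff₀ hN, mul_one]
    have := zk_jb_abs ((a - b : ℤ) : ℝ)
    push_cast at this ⊢; exact this
  calc _ ≤ 1 * (jbR (a : ℝ) + jbR (b : ℝ)) := by gcongr
    _ ≤ _ := by
      rw [one_mul]
      refine (pow_le_pow_iff_left₀ (by positivity) (by positivity) two_ne_zero).1 ?_
      rw [mul_pow, Real.sq_sqrt (by positivity), mul_pow]
      norm_num at hT ⊢
      exact hT

lemma zk_cs (u v : ℤ × ℤ → ℝ≥0∞) :
    ∑' p, u p * v p ≤ (∑' p, u p ^ 2) ^ (1/2 : ℝ) * (∑' p, v p ^ 2) ^ (1/2 : ℝ) := by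
  have := ENNReal.lintegral_mul_le_Lp_mul_Lq (MeasureTheory.Measure.count : MeasureTheory.Measure (ℤ × ℤ))
    (Real.HolderConjugate.two_two) (f := u) (g := v) (by fun_prop) (by fun_prop)
  simpa [MeasureTheory.lintegral_count] using this

lemma zk_pair (a b : ℤ → ℝ≥0) (e : ℤ × ℤ → ℤ × ℤ) (he : Function.Injective e) :
    (∑' p, ((a (e p).1 : ℝ≥0∞) * b (e p).2) ^ 2) ^ (1/2 : ℝ) ≤ l2Z a * l2Z b := by
  unfold l2Z
  rw [← ENNReal.mul_rpow_of_nonneg _ _ (by norm_num)]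
  apply ENNReal.rpow_le_rpow _ (by norm_num)
  calc _ ≤ ∑' q : ℤ × ℤ, ((a q.1 : ℝ≥0∞) * b q.2) ^ 2 :=
        ENNReal.tsum_comp_le_tsum_of_injective he (fun q : ℤ × ℤ => ((a q.1 : ℝ≥0∞) * b q.2) ^ 2)
    _ = _ := by
      rw [ENNReal.tsum_prod']
      simp_rw [mul_pow, ENNReal.tsum_mul_left, ENNReal.tsum_mul_right]

lemma zk_quad (a b c d : ℤ → ℝ≥0) (e e' : ℤ × ℤ → ℤ × ℤ) (he : Function.Injective e)
    (he' : Function.Injective e') :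
    ∑' p, ((a (e p).1 : ℝ≥0∞) * b (e p).2) * ((c (e' p).1 : ℝ≥0∞) * d (e' p).2) ≤
      l2Z a * l2Z b * (l2Z c * l2Z d) :=
  (zk_cs _ _).trans (mul_le_mul' (zk_pair a b e he) (zk_pair c d e' he'))

lemma zk_A_coe (n : ℤ) : (zkA n : ℝ) = 1 / jbR n := by
  have := zk_jb_pos n
  unfold zkA; rw [Real.coe_toNNReal _ (by positivity)]

lemma zk_A_fin : l2Z zkA ≠ ⊤ := by
  unfold l2Z
  apply ENNReal.rpow_ne_top_of_nonneg (by norm_num)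
  have hs : Summable (fun n : ℤ => zkA n ^ 2) := by
    rw [← NNReal.summable_coe]
    have h1 : Summable (fun n : ℤ => 1 / (n : ℝ) ^ 2 + if n = 0 then (1:ℝ) else 0) :=
      (Real.summable_one_div_int_pow.2 (by norm_num)).add (hasSum_ite_eq 0 1).summable
    refine Summable.of_nonneg_of_le (fun n => NNReal.coe_nonneg _) (fun n => ?_) h1
    push_cast
    rw [zk_A_coe, div_pow, zk_jb_sq]
    by_cases h : n = 0
    · simp [h]
    · have : (0:ℝ) < (n : ℝ) ^ 2 := by positivity
      simp only [h, if_false, add_zero, one_pow]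
      gcongr; linarith
  have := ENNReal.tsum_coe_ne_top_iff_summable.2 hs
  simpa using this

theorem Zakharov_W4 :
    ∃ C : ℝ, 0 < C ∧
      ∀ σ : ℝ, (σ = 1 ∨ σ = -1) →
        ∀ f g h : ℤ → ℝ≥0,
          Summable (fun n => f n ^ 2) → Summable (fun n => g n ^ 2) →
          Summable (fun n => h n ^ 2) →
          (∑' p : ℤ × ℤ,
              ENNReal.ofReal (jbR ((p.1 - p.2 : ℤ) : ℝ) ^ (-(1 : ℝ)) * (|p.1 - p.2| : ℝ) *
                  (jbR (p.1 : ℝ) + jbR (p.2 : ℝ)) /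
                  (jbR (PhiZak σ p.1 p.2) ^ (1/2 : ℝ) * jbR (p.1 : ℝ) ^ (1/2 : ℝ) *
                    jbR (p.2 : ℝ) ^ (1/2 : ℝ))) *
                (f (p.1 - p.2) : ℝ≥0∞) * (g p.1 : ℝ≥0∞) * (h p.2 : ℝ≥0∞))
            ≤ ENNReal.ofReal C * (l2Z f * l2Z g * l2Z h) := by
  refine ⟨16 * (l2Z zkA).toReal + 1, by positivity, ?_⟩
  intro σ hσ f g h _ _ _
  have hC : 16 * l2Z zkA ≤ ENNReal.ofReal (16 * (l2Z zkA).toReal + 1) := by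
    calc 16 * l2Z zkA = ENNReal.ofReal (16 * (l2Z zkA).toReal) := by
          rw [ENNReal.ofReal_mul (by norm_num), ENNReal.ofReal_toReal zk_A_fin]; norm_num
      _ ≤ _ := ENNReal.ofReal_le_ofReal (by linarith)
  have hw : ∀ p : ℤ × ℤ, ENNReal.ofReal (jbR ((p.1 - p.2 : ℤ) : ℝ) ^ (-(1 : ℝ)) *
        (|p.1 - p.2| : ℝ) * (jbR (p.1 : ℝ) + jbR (p.2 : ℝ)) /
                  (jbR (PhiZak σ p.1 p.2) ^ (1/2 : ℝ) * jbR (p.1 : ℝ) ^ (1/2 : ℝ) *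
                    jbR (p.2 : ℝ) ^ (1/2 : ℝ))) ≤
      4 * ((zkA p.1 : ℝ≥0∞) + zkA p.2 + zkA (p.1 - p.2) + zkA (p.1 + p.2)) := by
    intro p
    refine (ENNReal.ofReal_le_ofReal (zk_W σ hσ p.1 p.2)).trans (le_of_eq ?_)
    rw [← zk_A_coe, ← zk_A_coe, ← zk_A_coe, ← zk_A_coe]
    have : (4 * ((zkA p.1 : ℝ) + zkA p.2 + zkA (p.1 - p.2) + zkA (p.1 + p.2))) =
      ((4 * (zkA p.1 + zkA p.2 + zkA (p.1 - p.2) + zkA (p.1 + p.2)) : ℝ≥0) : ℝ) := by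
      push_cast; ring
    rw [this, ENNReal.ofReal_coe_nnreal]
    push_cast; rfl
  have q1 := zk_quad zkA f g h (fun p => (p.1, p.1 - p.2)) id
    (by rintro ⟨x, y⟩ ⟨z, w⟩ hh; simp only [Prod.mk.injEq] at hh ⊢; omega) Function.injective_id
  have q2 := zk_quad zkA f g h (fun p => (p.2, p.1 - p.2)) id
    (by rintro ⟨x, y⟩ ⟨z, w⟩ hh; simp only [Prod.mk.injEq] at hh ⊢; omega) Function.injective_id
  have q3 := zk_quad zkA g f h (fun p => (p.1 - p.2, p.1)) (fun p => (p.1 - p.2, p.2))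
    (by rintro ⟨x, y⟩ ⟨z, w⟩ hh; simp only [Prod.mk.injEq] at hh ⊢; omega)
    (by rintro ⟨x, y⟩ ⟨z, w⟩ hh; simp only [Prod.mk.injEq] at hh ⊢; omega)
  have q4 := zk_quad zkA f g h (fun p => (p.1 + p.2, p.1 - p.2)) id
    (by rintro ⟨x, y⟩ ⟨z, w⟩ hh; simp only [Prod.mk.injEq] at hh ⊢; omega) Function.injective_id
  simp only [id] at q1 q2 q3 q4
  refine le_trans (ENNReal.tsum_le_tsum (g := fun p : ℤ × ℤ => 4 * (
    ((zkA p.1 : ℝ≥0∞) * f (p.1 - p.2)) * ((g p.1 : ℝ≥0∞) * h p.2) +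
    ((zkA p.2 : ℝ≥0∞) * f (p.1 - p.2)) * ((g p.1 : ℝ≥0∞) * h p.2) +
    ((zkA (p.1 - p.2) : ℝ≥0∞) * g p.1) * ((f (p.1 - p.2) : ℝ≥0∞) * h p.2) +
    ((zkA (p.1 + p.2) : ℝ≥0∞) * f (p.1 - p.2)) * ((g p.1 : ℝ≥0∞) * h p.2))) (fun p => ?_)) ?_
  · calc _ ≤ 4 * ((zkA p.1 : ℝ≥0∞) + zkA p.2 + zkA (p.1 - p.2) + zkA (p.1 + p.2)) *
          (f (p.1 - p.2) : ℝ≥0∞) * (g p.1 : ℝ≥0∞) * (h p.2 : ℝ≥0∞) := by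
          gcongr; exact hw p
      _ = _ := by ring
  · rw [ENNReal.tsum_mul_left, ENNReal.tsum_add, ENNReal.tsum_add, ENNReal.tsum_add]
    refine (mul_le_mul_right (add_le_add (add_le_add (add_le_add q1 q2) q3) q4) 4).trans ?_
    calc _ = 16 * l2Z zkA * (l2Z f * l2Z g * l2Z h) := by ring
      _ ≤ _ := by gcongr
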